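/- **Calculus.** Fix a set $Chan$ of channels and let $Act = Chan\cup\{\bar a\mid a\in Chan\}\cup\{\tau\}$. RCCS terms are: variables $X$; finite nondeterministic choices $\sum_{i\in I}\alpha_i.T_i$ with $\alpha_i\in Chan\cup\{\bar a\mid a\in Chan\}$ ($\mathbf 0$ is the empty one); random choices $\bigoplus_{i\in I}p_i\tau.T_i$ with $I$ finite, $|I|\ge 2$, $p_i\in(0,1)$, $\sum_i p_i=1$; compositions $S\,|\,T$; localizations $(a)T$; fixpoints $\mu X.T$ in which every free occurrence of $X$ in $T$ lies under a choice. $\mathcal P$ is the set of closed terms (processes), taken as syntactic objects. Transitions, with labels in $Act\cup\{p\tau\mid 0<p<1\}$ and $1\tau=\tau$: $\sum_i\alpha_i.T_i\xrightarrow{\alpha_i}T_i$; $\bigoplus_i p_i\tau.T_i\xrightarrow{p_i\tau}T_i$; $S|T\xrightarrow{\tau}S'|T'$ if $S\xrightarrow{\bar\alpha}S'$ and $T\xrightarrow{\alpha}T'$ (where $\bar{\bar a}=a$); $S|T\xrightarrow{\lambda}S'|T$ if $S\xrightarrow{\lambda}S'$, and symmetrically; $(a)T\xrightarrow{\lambda}(a)T'$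 if $T\xrightarrow{\lambda}T'$ and $\lambda\notin\{a,\bar a\}$; $\mu X.T\xrightarrow{\lambda}T'$ if $T\{\mu X.T/X\}\xrightarrow{\lambda}T'$. A collective random transition of a process consists of all the transitions $\xrightarrow{p_i\tau}$ that one single random choice gives rise to. **Bisimulation.** Let $\mathcal E$ be an equivalence on $\mathcal P$. An $\epsilon$-tree of $A$ (with regard to $\mathcal E$) is a finitely branching rooted tree, possibly infinite, with nodes labeled by members of the class $[A]_{\mathcal E}$, root labeled $A$, and edges labeled by numbers in $(0,1]$, such that at every node, labeled $B$, one of the following holds: it is a leaf; it has a single child, labeled $B'$, with edge label $1$ and $B\xrightarrow{\tau}B'$; or its children and their edge labels are exactly the $B_i$ and $p_i$ of one collective random transition of $B$. Let $\mathsf P^f(t)\in[0,1]$ be the sum, over the leaves of $t$, of the product of the edge labels on the path from the root to that leaf; $t$ is *regular* if $\mathsf P^f(t)=1$ and *divergent* if $\mathsf P^f(t)=0$. $\mathcal E$ is *codivergent* if in each $\mathcal E$-class either every member or no member has a divergent $\epsilon$-tree. For $\ell\in Act$ and an $\mathcal E$-class $\mathcal C$, write $A\rightsquigarrow_{\mathcal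 E}\xrightarrow{\ell}\mathcal C$ if $A$ has a regular $\epsilon$-tree each leaf $L$ of which has a transition $L\xrightarrow{\ell}L'\in\mathcal C$. For $q\in(0,1]$ and a class $\mathcal C\ne[A]_{\mathcal E}$, write $A\rightsquigarrow_{\mathcal E}\xrightarrow{q}\mathcal C$ if $A$ has a regular $\epsilon$-tree each leaf $L$ of which has a collective random transition with probabilities $p_i$ and targets $L_i$ such that $\sum_{L_i\in\mathcal C}p_i = q\,\bigl(1-\sum_{L_i\in[A]_{\mathcal E}}p_i\bigr)$, the factor in parentheses being nonzero. $\mathcal E$ is a *branching bisimulation* if for all $A\,\mathcal E\,B$ and all classes $\mathcal C$: $A\rightsquigarrow_{\mathcal E}\xrightarrow{\ell}\mathcal C$ implies $B\rightsquigarrow_{\mathcal E}\xrightarrow{\ell}\mathcal C$ whenever $\ell\ne\tau$ or $\mathcal C\ne[A]_{\mathcal E}$; and $A\rightsquigarrow_{\mathcal E}\xrightarrow{q}\mathcal C$ implies $B\rightsquigarrow_{\mathcal E}\xrightarrow{q}\mathcal C$ whenever $q\in(0,1]$ and $\mathcal C\ne[A]_{\mathcal E}$. Finally $=_{\mathrm{RCCS}}$,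 the largest codivergent branching bisimulation, is the union of all codivergent branching bisimulations on $\mathcal P$. **Statement.** Let $a$, $b$, $c$ be pairwise distinct channels. Write $a.\mathbf 0+\tau.T$ for $(c)(\bar c.\mathbf 0\,|\,(a.\mathbf 0+c.T))$, likewise with $b$ in place of $a$, and $a.\mathbf 0+b.\mathbf 0+\tau.T$ for $(c)(\bar c.\mathbf 0\,|\,(a.\mathbf 0+b.\mathbf 0+c.T))$. Put $$H=\mu X.\bigl(\tfrac12\tau.(a.\mathbf 0+\tau.X)\oplus\tfrac12\tau.(b.\mathbf 0+\tau.X)\bigr),\quad H_a=a.\mathbf 0+\tau.H,\quad H_b=b.\mathbf 0+\tau.H,\quad E=\mu X.(a.\mathbf 0+b.\mathbf 0+\tau.X).$$ Since a derived prefix $\tau.T$ literally evolves to $(c)(\mathbf 0\,|\,T)$ rather than to $T$, processes are considered modulo this residue. Precisely, the least equivalence relation on $\mathcal P$ that contains $(H,H_a)$, $(H,H_b)$, $(H,E)$, and all pairs $\bigl(A,(c)(\mathbf 0\,|\,A)\bigr)$ with $A\in\mathcal P$ in which $c$ does not occur free, is a codivergent branching bisimulation on $\mathcal P$. In particular $H=_{\mathrm{RCCS}}E$,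 that is, $H=_{\mathrm{RCCS}}\mu X.(a.\mathbf 0+b.\mathbf 0+\tau.X)$. -/

import Mathlib

noncomputable section

universe u

/-- RCCS terms over a set of channels, with de Bruijn process variables.
`sum n α T` is the nondeterministic choice `Σ_{i∈[n]} α_i.T_i` (guards are
names `Sum.inl a` or conames `Sum.inr a`); `rand n p T` is the random choice
`⊕_{i∈[n]} p_i τ.T_i`; `par` is composition, `loc a T` is localization `(a)T`,
and `fix T` is the fixpoint `μX.T`. -/
inductive Tm (Chan : Type u) : Type u
  | var : ℕ → Tm Chan
  | sum : (n : ℕ) → (Fin n → Chan ⊕ Chan) → (Fin n → Tm Chan) → Tm Chan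
  | rand : (n : ℕ) → (Fin n → ℝ) → (Fin n → Tm Chan) → Tm Chan
  | par : Tm Chan → Tm Chan → Tm Chan
  | loc : Chan → Tm Chan → Tm Chan
  | fix : Tm Chan → Tm Chan

variable {Chan : Type u}

/-- Labels: names, conames, and `tau p` for `p ∈ (0,1]`; `tau 1` is the plain
silent action `τ`, identified with `1τ`. -/
inductive Lab (Chan : Type u) : Type u
  | name : Chan → Lab Chan
  | coname : Chan → Lab Chan
  | tau : ℝ → Lab Chan

/-- The label of an external prefix. -/
def guardLab : Chan ⊕ Chan → Lab Chan
  | .inl a => .name a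
  | .inr a => .coname a

/-- A label is an action in `Act` if it is a name, a coname, or `τ = 1τ`. -/
def Lab.IsAct : Lab Chan → Prop
  | .name _ => True
  | .coname _ => True
  | .tau p => p = 1

/-- Shift de Bruijn indices `≥ c` up by one. -/
def Tm.lift : ℕ → Tm Chan → Tm Chan
  | c, .var n => .var (if n < c then n else n + 1)
  | c, .sum n α T => .sum n α fun i => Tm.lift c (T i)
  | c, .rand n p T => .rand n p fun i => Tm.lift c (T i)
  | c, .par S T => .par (Tm.lift c S) (Tm.lift c T)
  | c, .loc a T => .loc a (Tm.lift c T)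
  | c, .fix T => .fix (Tm.lift (c + 1) T)

/-- Capture-avoiding substitution of the term `S` for variable `c`
(other variables above `c` are shifted down). -/
def Tm.inst : ℕ → Tm Chan → Tm Chan → Tm Chan
  | c, S, .var n => if n < c then .var n else if n = c then S else .var (n - 1)
  | c, S, .sum n α T => .sum n α fun i => Tm.inst c S (T i)
  | c, S, .rand n p T => .rand n p fun i => Tm.inst c S (T i)
  | c, S, .par S' T => .par (Tm.inst c S S') (Tm.inst c S T)
  | c, S, .loc a T => .loc a (Tm.inst c S T)
  | c, S, .fix T => .fix (Tm.inst (c + 1) (Tm.lift 0 S) T)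

/-- All free variables are `< k`. -/
def Tm.ClosedAt : ℕ → Tm Chan → Prop
  | k, .var n => n < k
  | k, .sum _ _ T => ∀ i, Tm.ClosedAt k (T i)
  | k, .rand _ _ T => ∀ i, Tm.ClosedAt k (T i)
  | k, .par S T => Tm.ClosedAt k S ∧ Tm.ClosedAt k T
  | k, .loc _ T => Tm.ClosedAt k T
  | k, .fix T => Tm.ClosedAt (k + 1) T

/-- Variable `v` is guarded: every free occurrence of `v` is under a prefix. -/
def Tm.Guarded : ℕ → Tm Chan → Prop
  | v, .var n => n ≠ v
  | _, .sum _ _ _ => True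
  | _, .rand _ _ _ => True
  | v, .par S T => Tm.Guarded v S ∧ Tm.Guarded v T
  | v, .loc _ T => Tm.Guarded v T
  | v, .fix T => Tm.Guarded (v + 1) T

/-- Well-formedness: in every random choice `⊕_{i∈I} p_i τ.T_i` we have `|I| ≥ 2`,
`p_i ∈ (0,1)` and `Σ_i p_i = 1`; in every fixpoint `μX.T` the variable `X` is
guarded in `T`. -/
def Tm.WF : Tm Chan → Prop
  | .var _ => True
  | .sum _ _ T => ∀ i, Tm.WF (T i)
  | .rand n p T => 2 ≤ n ∧ (∀ i, 0 < p i ∧ p i < 1) ∧ (∑ i, p i) = 1 ∧ ∀ i, Tm.WF (T i)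
  | .par S T => Tm.WF S ∧ Tm.WF T
  | .loc _ T => Tm.WF T
  | .fix T => Tm.Guarded 0 T ∧ Tm.WF T

/-- The channel `c` occurs free in a term (it is bound by localization `(c)T`). -/
def Tm.FreeIn (c : Chan) : Tm Chan → Prop
  | .var _ => False
  | .sum _ α T => ∃ i, α i = Sum.inl c ∨ α i = Sum.inr c ∨ Tm.FreeIn c (T i)
  | .rand _ _ T => ∃ i, Tm.FreeIn c (T i)
  | .par S T => Tm.FreeIn c S ∨ Tm.FreeIn c T
  | .loc a T => c ≠ a ∧ Tm.FreeIn c T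
  | .fix T => Tm.FreeIn c T

/-- The transition relation of RCCS. -/
inductive Step : Tm Chan → Lab Chan → Tm Chan → Prop
  | sum {n α T} (i : Fin n) : Step (.sum n α T) (guardLab (α i)) (T i)
  | rand {n p T} (i : Fin n) : Step (.rand n p T) (.tau (p i)) (T i)
  | comL {S S' T T' a} : Step S (.name a) S' → Step T (.coname a) T' →
      Step (.par S T) (.tau 1) (.par S' T')
  | comR {S S' T T' a} : Step S (.coname a) S' → Step T (.name a) T' →
      Step (.par S T) (.tau 1) (.par S' T')
  | parL {S S' T l} : Step S l S' → Step (.par S T) l (.par S' T)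
  | parR {S T T' l} : Step T l T' → Step (.par S T) l (.par S T')
  | loc {T T' l} (a : Chan) : Step T l T' → l ≠ .name a → l ≠ .coname a →
      Step (.loc a T) l (.loc a T')
  | fix {T T' l} : Step (Tm.inst 0 (.fix T) T) l T' → Step (.fix T) l T'

/-- Collective silent transitions `B →^{∐_{i∈[n]} p_i τ} ∐_{i∈[n]} B_i`,
arising from a single random choice and closed under composition,
localization and recursion. -/
inductive CStep : Tm Chan → (n : ℕ) → (Fin n → ℝ) → (Fin n → Tm Chan) → Prop
  | rand {n p T} : CStep (.rand n p T) n p T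
  | parL {S T n p S'} : CStep S n p S' → CStep (.par S T) n p fun i => .par (S' i) T
  | parR {S T n p T'} : CStep T n p T' → CStep (.par S T) n p fun i => .par S (T' i)
  | loc {T n p T'} (a : Chan) : CStep T n p T' → CStep (.loc a T) n p fun i => .loc a (T' i)
  | fix {T n p T'} : CStep (Tm.inst 0 (.fix T) T) n p T' → CStep (.fix T) n p T'

/-- The set `P_RCCS` of RCCS processes: closed well-formed terms. -/
def Proc (Chan : Type u) : Type u := {T : Tm Chan // T.ClosedAt 0 ∧ T.WF}

/-- A (potential) silent tree: nodes are addressed by reversed lists of child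
indices (the root is `[]`, the `i`-th child of `σ` is `i :: σ`); each node
carries a process label and the probability labelling its incoming edge
(the root carries `1`). -/
structure PTree (Chan : Type u) where
  node : List ℕ → Option (Proc Chan × ℝ)

namespace PTree

variable (t : PTree Chan)

/-- The address `σ` is a node of the tree. -/
def hasNode (σ : List ℕ) : Prop := (t.node σ).isSome

/-- The probability labelling the incoming edge of the node at `σ`. -/
def edgeProb (σ : List ℕ) : ℝ := ((t.node σ).map Prod.snd).getD 0

/-- The probability of the path from the root to `σ`: the product of the edge
labels along it (`1` for the empty path). -/
def pathProb (t : PTree Chan) : List ℕ → ℝ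
  | [] => 1
  | i :: σ => t.edgeProb (i :: σ) * pathProb t σ

/-- `σ` is a leaf. -/
def IsLeaf (σ : List ℕ) : Prop := t.hasNode σ ∧ ¬ t.hasNode (0 :: σ)

open scoped Classical in
/-- `P^k(t)`: the sum of the probabilities of the finite branches of `t` of
length at most `k`. -/
def finBranchProb (k : ℕ) : ℝ :=
  ∑' σ : List ℕ, if t.IsLeaf σ ∧ σ.length ≤ k then t.pathProb σ else 0

/-- `t` is regular: `P^f(t) = lim_k P^k(t) = 1`. -/
def Regular : Prop := Filter.Tendsto t.finBranchProb Filter.atTop (nhds 1)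

/-- `t` is divergent: `P^f(t) = lim_k P^k(t) = 0`. -/
def Divergent : Prop := Filter.Tendsto t.finBranchProb Filter.atTop (nhds 0)

end PTree

/-- `t` is a silent tree of `A`: the root is labeled `A`, the node set is
prefix-closed with children indexed by an initial segment of `ℕ`, the tree is
finitely branching, and every edge labeled `p` from `B` to `B'` satisfies
`p ∈ (0,1]` and `B →^{pτ} B'`. -/
def IsSilentTree (A : Proc Chan) (t : PTree Chan) : Prop :=
  t.node [] = some (A, 1) ∧
  (∀ i σ, t.hasNode (i :: σ) → t.hasNode σ) ∧
  (∀ i j σ, j ≤ i → t.hasNode (i :: σ) → t.hasNode (j :: σ)) ∧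
  (∀ σ, ∃ n, ∀ i, n ≤ i → ¬ t.hasNode (i :: σ)) ∧
  (∀ σ i B p B' p', t.node σ = some (B, p) → t.node (i :: σ) = some (B', p') →
    0 < p' ∧ p' ≤ 1 ∧ Step B.val (.tau p') B'.val)

/-- An ε-tree of `A` with regard to `E`: an `E`-tree of `A` (all node labels lie
in `[A]_E`) such that (1) any edge labeled `q < 1` out of a node `B` comes from a
collective random transition whose targets are exactly the children of `B`, and
(2) an edge labeled `1` out of `B` is a transition `B →^τ B'` to the unique
child `B'` of `B`. -/
def IsETree (E : Proc Chan → Proc Chan → Prop) (A : Proc Chan) (t : PTree Chan) : Prop :=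
  IsSilentTree A t ∧
  (∀ σ B p, t.node σ = some (B, p) → E A B) ∧
  (∀ σ i B p B' q, t.node σ = some (B, p) → t.node (i :: σ) = some (B', q) → q < 1 →
    ∃ n ps Ts, CStep B.val n ps Ts ∧
      (∀ j : ℕ, t.hasNode (j :: σ) ↔ j < n) ∧
      (∀ j : Fin n, ∃ C : Proc Chan, C.val = Ts j ∧ t.node ((j : ℕ) :: σ) = some (C, ps j))) ∧
  (∀ σ i B p B', t.node σ = some (B, p) → t.node (i :: σ) = some (B', 1) →
    Step B.val (.tau 1) B'.val ∧ i = 0 ∧ ¬ t.hasNode (1 :: σ))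

/-- The `E`-class of `A`. -/
def classOf (E : Proc Chan → Proc Chan → Prop) (A : Proc Chan) : Set (Proc Chan) := {B | E A B}

/-- `C` is an equivalence class of `E`. -/
def IsClass (E : Proc Chan → Proc Chan → Prop) (C : Set (Proc Chan)) : Prop :=
  ∃ A, C = classOf E A

/-- An equivalence `E` on `P_RCCS` is codivergent if for every `E`-class either
all members have a divergent ε-tree with regard to `E` or none does. -/
def Codivergent (E : Proc Chan → Proc Chan → Prop) : Prop :=
  ∀ A B, E A B →
    ((∃ t, IsETree E A t ∧ t.Divergent) ↔ (∃ t, IsETree E B t ∧ t.Divergent))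

/-- An ℓ-transition `A ⇝_E →^ℓ C`: a regular ε-tree of `A` with regard to `E`
such that every leaf `L` has a transition `L →^ℓ L'` with `L' ∈ C`. -/
def LTrans (E : Proc Chan → Proc Chan → Prop) (A : Proc Chan) (l : Lab Chan)
    (C : Set (Proc Chan)) : Prop :=
  ∃ t, IsETree E A t ∧ t.Regular ∧
    ∀ σ L p, t.node σ = some (L, p) → ¬ t.hasNode (0 :: σ) →
      ∃ L' ∈ C, Step L.val l L'.val

/-- The raw term `T` belongs to the set `C` of processes. -/
def inC (C : Set (Proc Chan)) (T : Tm Chan) : Prop := ∃ P ∈ C, P.val = T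

open scoped Classical in
/-- `P(L → C)` of a collective silent transition: the sum of the `p_i` whose
target lies in `C`. -/
def collProb (C : Set (Proc Chan)) {n : ℕ} (ps : Fin n → ℝ) (Ts : Fin n → Tm Chan) : ℝ :=
  ∑ i, if inC C (Ts i) then ps i else 0

/-- A `q`-transition `A ⇝_E →^q C`: a regular ε-tree of `A` with regard to `E`
such that every leaf has a collective silent transition whose weighted
probability `P_E(L → C) = P(L → C)/(1 − P(L → [A]_E))` of reaching `C` is `q`. -/
def QTrans (E : Proc Chan → Proc Chan → Prop) (A : Proc Chan) (q : ℝ)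
    (C : Set (Proc Chan)) : Prop :=
  ∃ t, IsETree E A t ∧ t.Regular ∧
    ∀ σ L p, t.node σ = some (L, p) → ¬ t.hasNode (0 :: σ) →
      ∃ (n : ℕ) (ps : Fin n → ℝ) (Ts : Fin n → Tm Chan), CStep L.val n ps Ts ∧
        collProb C ps Ts / (1 - collProb (classOf E A) ps Ts) = q

/-- `E` is a branching bisimulation on `P_RCCS`: an equivalence such that
(1) ℓ-transitions with `ℓ ≠ τ ∨ C ≠ [A]_E` are bisimulated by all members of
`[A]_E`, and (2) likewise for `q`-transitions with `q ∈ (0,1]` and `C ≠ [A]_E`. -/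
def IsBB (E : Proc Chan → Proc Chan → Prop) : Prop :=
  Equivalence E ∧
  (∀ A B l C, l.IsAct → IsClass E C → E A B → (l ≠ Lab.tau 1 ∨ C ≠ classOf E A) →
    LTrans E A l C → LTrans E B l C) ∧
  (∀ A B q C, 0 < q → q ≤ 1 → IsClass E C → E A B → C ≠ classOf E A →
    QTrans E A q C → QTrans E B q C)

/-- `E` is a codivergent branching bisimulation on `P_RCCS`. -/
def IsCBB (E : Proc Chan → Proc Chan → Prop) : Prop := IsBB E ∧ Codivergent E

/-- `=_RCCS`, the largest codivergent branching bisimulation: the union of all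
codivergent branching bisimulations. -/
def RccsEq (A B : Proc Chan) : Prop := ∃ E, IsCBB E ∧ E A B

/-! ### Concrete processes -/

/-- The empty nondeterministic choice `0`. -/
def Tm.nil : Tm Chan := .sum 0 Fin.elim0 Fin.elim0

/-- The prefix `α.T`. -/
def pfx (g : Chan ⊕ Chan) (T : Tm Chan) : Tm Chan := .sum 1 (fun _ => g) (fun _ => T)

/-- The binary choice `α₁.T₁ + α₂.T₂`. -/
def sum2 (g₁ g₂ : Chan ⊕ Chan) (T₁ T₂ : Tm Chan) : Tm Chan := .sum 2 ![g₁, g₂] ![T₁, T₂]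

/-- The binary random choice `pτ.T₁ ⊕ qτ.T₂`. -/
def rand2 (p q : ℝ) (T₁ T₂ : Tm Chan) : Tm Chan := .rand 2 ![p, q] ![T₁, T₂]

/-- `c̄.0`. -/
def coNil (c : Chan) : Tm Chan := pfx (Sum.inr c) Tm.nil

/-- `a.T' + τ.T`, the abbreviation `(c)(c̄.0 | (a.T' + c.T))` for a fresh `c`. -/
def plusTau (a c : Chan) (T' T : Tm Chan) : Tm Chan :=
  .loc c (.par (coNil c) (sum2 (Sum.inl a) (Sum.inl c) T' T))

/-- `H = μX.(½τ.(a.0 + τ.X) ⊕ ½τ.(b.0 + τ.X))`. -/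
def Htm (a b c : Chan) : Tm Chan :=
  .fix (rand2 (1/2) (1/2) (plusTau a c Tm.nil (.var 0)) (plusTau b c Tm.nil (.var 0)))

/-- `H_a = a.0 + τ.H`. -/
def HaTm (a b c : Chan) : Tm Chan := plusTau a c Tm.nil (Htm a b c)

/-- `H_b = b.0 + τ.H`. -/
def HbTm (a b c : Chan) : Tm Chan := plusTau b c Tm.nil (Htm a b c)

/-- `a.0 + b.0 + τ.T`, the abbreviation `(c)(c̄.0 | (a.0 + b.0 + c.T))`. -/
def plus3 (a b c : Chan) (T : Tm Chan) : Tm Chan :=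
  .loc c (.par (coNil c) (.sum 3 ![Sum.inl a, Sum.inl b, Sum.inl c] ![Tm.nil, Tm.nil, T]))

/-- `E = μX.(a.0 + b.0 + τ.X)`. -/
def Etm (a b c : Chan) : Tm Chan := .fix (plus3 a b c (.var 0))

lemma Htm_spec (a b c : Chan) : (Htm a b c).ClosedAt 0 ∧ (Htm a b c).WF := by
  refine ⟨?_, ?_⟩ <;>
    simp [Htm, rand2, plusTau, sum2, coNil, pfx, Tm.nil, Tm.ClosedAt, Tm.WF, Tm.Guarded,
      Fin.forall_fin_two, Fin.sum_univ_two] <;> norm_num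

lemma HaTm_spec (a b c : Chan) : (HaTm a b c).ClosedAt 0 ∧ (HaTm a b c).WF := by
  refine ⟨?_, ?_⟩ <;>
    simp [HaTm, Htm, rand2, plusTau, sum2, coNil, pfx, Tm.nil, Tm.ClosedAt, Tm.WF, Tm.Guarded,
      Fin.forall_fin_two, Fin.sum_univ_two] <;> norm_num

lemma HbTm_spec (a b c : Chan) : (HbTm a b c).ClosedAt 0 ∧ (HbTm a b c).WF := by
  refine ⟨?_, ?_⟩ <;>
    simp [HbTm, Htm, rand2, plusTau, sum2, coNil, pfx, Tm.nil, Tm.ClosedAt, Tm.WF, Tm.Guarded,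
      Fin.forall_fin_two, Fin.sum_univ_two] <;> norm_num

lemma Etm_spec (a b c : Chan) : (Etm a b c).ClosedAt 0 ∧ (Etm a b c).WF := by
  refine ⟨?_, ?_⟩ <;>
    simp [Etm, plus3, coNil, pfx, Tm.nil, Tm.ClosedAt, Tm.WF, Tm.Guarded,
      Fin.forall_fin_succ, Fin.forall_fin_two]

/-- `H` as a process. -/
def HP (a b c : Chan) : Proc Chan := ⟨Htm a b c, Htm_spec a b c⟩
/-- `H_a` as a process. -/
def HaP (a b c : Chan) : Proc Chan := ⟨HaTm a b c, HaTm_spec a b c⟩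
/-- `H_b` as a process. -/
def HbP (a b c : Chan) : Proc Chan := ⟨HbTm a b c, HbTm_spec a b c⟩
/-- `E` as a process. -/
def EP (a b c : Chan) : Proc Chan := ⟨Etm a b c, Etm_spec a b c⟩

/-- `(c)(0 | A)`. This is what a process `(c)(c̄.0 | (… + c.A))`, abbreviated `… + τ.A`,
literally becomes when it performs the prefix `τ`: the process `A` in a context that is
inert as long as `c` is not free in `A`. -/
def residue (c : Chan) (A : Proc Chan) : Proc Chan :=
  ⟨.loc c (.par Tm.nil A.val),
    ⟨fun i => i.elim0, A.property.1⟩, ⟨fun i => i.elim0, A.property.2⟩⟩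

end

universe u

variable {Chan : Type u}

/-! ### Free channels and transitions -/

lemma Tm.FreeIn.of_lift {c : Chan} {T : Tm Chan} {k : ℕ} (h : (T.lift k).FreeIn c) :
    T.FreeIn c := by
  induction T generalizing k with
  | var n => exact h
  | sum n α T ih =>
    obtain ⟨i, hi⟩ := h
    exact ⟨i, hi.imp id (Or.imp id (ih i))⟩
  | rand n p T ih =>
    obtain ⟨i, hi⟩ := h
    exact ⟨i, ih i hi⟩
  | par S T ihS ihT => exact h.imp ihS ihT
  | loc a T ih => exact ⟨h.1, ih h.2⟩
  | fix T ih => exact ih (k := k + 1) h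

lemma Tm.FreeIn.of_inst {c : Chan} {S T : Tm Chan} {k : ℕ} (h : (Tm.inst k S T).FreeIn c) :
    S.FreeIn c ∨ T.FreeIn c := by
  induction T generalizing k S with
  | var n =>
    left
    simp only [Tm.inst] at h
    split_ifs at h
    · exact h.elim
    · exact h
    · exact h.elim
  | sum n α T ih =>
    obtain ⟨i, hi | hi | hi⟩ := h
    · exact .inr ⟨i, .inl hi⟩
    · exact .inr ⟨i, .inr (.inl hi)⟩
    · exact (ih i hi).imp id fun h => ⟨i, .inr (.inr h)⟩
  | rand n p T ih =>
    obtain ⟨i, hi⟩ := h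
    exact (ih i hi).imp id fun h => ⟨i, h⟩
  | par S' T ihS ihT =>
    rcases h with h | h
    · exact (ihS h).imp id .inl
    · exact (ihT h).imp id .inr
  | loc a T ih => exact (ih h.2).imp id fun h' => ⟨h.1, h'⟩
  | fix T ih => exact (ih (k := k + 1) h).imp (fun h => h.of_lift) id

lemma Step.freeIn {c : Chan} {T T' : Tm Chan} {l : Lab Chan} (h : Step T l T') :
    (T'.FreeIn c → T.FreeIn c) ∧ (l = .name c ∨ l = .coname c → T.FreeIn c) := by
  induction h with
  | @sum n α T i =>
    refine ⟨fun h => ⟨i, .inr (.inr h)⟩, fun h => ⟨i, ?_⟩⟩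
    cases hα : α i <;> simp_all [guardLab]
  | rand i => exact ⟨fun h => ⟨i, h⟩, by simp⟩
  | comL _ _ ih₁ ih₂ => exact ⟨Or.imp ih₁.1 ih₂.1, by simp⟩
  | comR _ _ ih₁ ih₂ => exact ⟨Or.imp ih₁.1 ih₂.1, by simp⟩
  | parL _ ih => exact ⟨Or.imp ih.1 id, fun h => .inl (ih.2 h)⟩
  | parR _ ih => exact ⟨Or.imp id ih.1, fun h => .inr (ih.2 h)⟩
  | loc a _ h₁ h₂ ih =>
    refine ⟨fun h => ⟨h.1, ih.1 h.2⟩, fun h => ⟨?_, ih.2 h⟩⟩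
    rintro rfl
    exact h.elim h₁ h₂
  | fix _ ih =>
    have key {T : Tm Chan} (h : (Tm.inst 0 (.fix T) T).FreeIn c) : (Tm.fix T).FreeIn c :=
      h.of_inst.elim id id
    exact ⟨fun h => key (ih.1 h), fun h => key (ih.2 h)⟩

lemma CStep.step {T : Tm Chan} {n : ℕ} {p : Fin n → ℝ} {Ts : Fin n → Tm Chan}
    (h : CStep T n p Ts) (i : Fin n) : Step T (.tau (p i)) (Ts i) := by
  induction h with
  | rand => exact .rand i
  | parL _ ih => exact .parL (ih i)
  | parR _ ih => exact .parR (ih i)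
  | loc a _ ih => exact .loc a (ih i) (by simp) (by simp)
  | fix _ ih => exact .fix (ih i)

lemma Step.sum_inv {n : ℕ} {α : Fin n → Chan ⊕ Chan} {T : Fin n → Tm Chan} {l : Lab Chan}
    {T' : Tm Chan} (h : Step (.sum n α T) l T') : ∃ i, l = guardLab (α i) ∧ T' = T i := by
  cases h with
  | sum i => exact ⟨i, rfl, rfl⟩

lemma not_step_nil {l : Lab Chan} {T : Tm Chan} : ¬ Step Tm.nil l T := fun h =>
  h.sum_inv.elim fun i _ => i.elim0

lemma not_cstep_nil {n : ℕ} {p : Fin n → ℝ} {Ts : Fin n → Tm Chan} :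
    ¬ CStep (Tm.nil : Tm Chan) n p Ts := fun h => by
  cases h

/-! ### The residue `(c)(0 | A)` -/

lemma not_freeIn_residue (c : Chan) (A : Proc Chan) : ¬ (residue c A).val.FreeIn c :=
  fun h => h.1 rfl

lemma residue_injective (c : Chan) : Function.Injective (residue c) := by
  intro A B h
  have := congrArg Subtype.val h
  simp only [residue, Tm.loc.injEq, Tm.par.injEq, true_and] at this
  exact Subtype.ext this

lemma Step.residue {c : Chan} {T T' : Tm Chan} {l : Lab Chan} (h : Step T l T')
    (hc : ¬ T.FreeIn c) : Step (.loc c (.par Tm.nil T)) l (.loc c (.par Tm.nil T')) :=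
  .loc c (.parR h) (fun e => hc (h.freeIn.2 (.inl e))) (fun e => hc (h.freeIn.2 (.inr e)))

lemma Step.residue_inv {c : Chan} {T T' : Tm Chan} {l : Lab Chan}
    (h : Step (.loc c (.par Tm.nil T)) l T') :
    ∃ T'', T' = .loc c (.par Tm.nil T'') ∧ Step T l T'' := by
  cases h with
  | loc _ h _ _ =>
    cases h with
    | comL h _ => exact (not_step_nil h).elim
    | comR h _ => exact (not_step_nil h).elim
    | parL h => exact (not_step_nil h).elim
    | parR h => exact ⟨_, rfl, h⟩

lemma CStep.residue {c : Chan} {T : Tm Chan} {n : ℕ} {p : Fin n → ℝ} {Ts : Fin n → Tm Chan}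
    (h : CStep T n p Ts) :
    CStep (.loc c (.par Tm.nil T)) n p fun i => .loc c (.par Tm.nil (Ts i)) :=
  .loc c (.parR h)

lemma CStep.residue_inv {c : Chan} {T : Tm Chan} {n : ℕ} {p : Fin n → ℝ} {Ts : Fin n → Tm Chan}
    (h : CStep (.loc c (.par Tm.nil T)) n p Ts) :
    ∃ Ts', (Ts = fun i => .loc c (.par Tm.nil (Ts' i))) ∧ CStep T n p Ts' := by
  cases h with
  | loc _ h =>
    cases h with
    | parL h => exact (not_cstep_nil h).elim
    | parR h => exact ⟨_, rfl, h⟩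

lemma exists_residue_of_val_eq {c : Chan} {T : Tm Chan} {Q : Proc Chan}
    (h : Q.val = .loc c (.par Tm.nil T)) : ∃ P : Proc Chan, P.val = T ∧ Q = residue c P := by
  have h₁ := Q.property
  rw [h] at h₁
  exact ⟨⟨T, h₁.1.2, h₁.2.2⟩, rfl, Subtype.ext h⟩

/-! ### Relabelling trees -/

namespace PTree

/-- Apply `f` to the process labels of a tree. -/
def map (f : Proc Chan → Proc Chan) (t : PTree Chan) : PTree Chan :=
  ⟨fun σ => (t.node σ).map fun x => (f x.1, x.2)⟩

variable (f : Proc Chan → Proc Chan) (t : PTree Chan)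

lemma map_hasNode (σ : List ℕ) : (t.map f).hasNode σ ↔ t.hasNode σ := by
  simp [hasNode, map]

lemma map_pathProb (σ : List ℕ) : (t.map f).pathProb σ = t.pathProb σ := by
  induction σ with
  | nil => rfl
  | cons i σ ih =>
    have h : (t.map f).edgeProb (i :: σ) = t.edgeProb (i :: σ) := by
      simp only [edgeProb, map, Option.map_map]
      rfl
    simp only [pathProb, ih, h]

open scoped Classical in
lemma map_finBranchProb : (t.map f).finBranchProb = t.finBranchProb := by
  funext k
  refine tsum_congr fun σ => if_congr ?_ (map_pathProb f t σ) rfl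
  simp only [IsLeaf, map_hasNode]

lemma map_node_eq_some {σ : List ℕ} {B : Proc Chan} {p : ℝ} :
    (t.map f).node σ = some (B, p) ↔ ∃ A, t.node σ = some (A, p) ∧ f A = B := by
  simp [map]

end PTree

/-- `f` carries the silent behaviour of the processes in `P` along. -/
structure SilentMap (P : Set (Proc Chan)) (f : Proc Chan → Proc Chan) : Prop where
  mem_step : ∀ A ∈ P, ∀ B p, Step A.val (.tau p) B.val → B ∈ P
  step : ∀ A ∈ P, ∀ B p, Step A.val (.tau p) B.val → Step (f A).val (.tau p) (f B).val
  cstep : ∀ A ∈ P, ∀ n (ps : Fin n → ℝ) (C : Fin n → Proc Chan),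
    CStep A.val n ps (fun i => (C i).val) → CStep (f A).val n ps fun i => (f (C i)).val

lemma IsETree.mem_of_node {P : Set (Proc Chan)} {f : Proc Chan → Proc Chan}
    (hf : SilentMap P f) {E : Proc Chan → Proc Chan → Prop} {A : Proc Chan} (hA : A ∈ P)
    {t : PTree Chan} (ht : IsETree E A t) {σ : List ℕ} {B : Proc Chan} {p : ℝ}
    (h : t.node σ = some (B, p)) : B ∈ P := by
  induction σ generalizing B p with
  | nil =>
    rw [ht.1.1] at h
    simp only [Option.some.injEq, Prod.mk.injEq] at h
    exact h.1 ▸ hA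
  | cons i σ ih =>
    have hσ : t.hasNode σ := ht.1.2.1 i σ (by simp [PTree.hasNode, h])
    obtain ⟨⟨C, q⟩, hC⟩ := Option.isSome_iff_exists.1 hσ
    exact hf.mem_step C (ih hC) B p (ht.1.2.2.2.2 σ i C q B p hC h).2.2

lemma IsETree.map {P : Set (Proc Chan)} {f : Proc Chan → Proc Chan} (hf : SilentMap P f)
    {E : Proc Chan → Proc Chan → Prop} {A : Proc Chan} (hA : A ∈ P)
    (hE : ∀ B ∈ P, E A B → E (f A) (f B))
    {t : PTree Chan} (ht : IsETree E A t) : IsETree E (f A) (t.map f) := by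
  have hP {σ B p} (h : t.node σ = some (B, p)) : B ∈ P := ht.mem_of_node hf hA h
  obtain ⟨⟨h₁, h₂, h₃, h₄, h₅⟩, h₆, h₇, h₈⟩ := ht
  simp only [IsETree, IsSilentTree, PTree.map_hasNode, PTree.map_node_eq_some]
  refine ⟨⟨⟨A, h₁, rfl⟩, h₂, h₃, h₄, ?_⟩, ?_, ?_, ?_⟩
  · rintro σ i _ p _ p' ⟨B, hB, rfl⟩ ⟨B', hB', rfl⟩
    obtain ⟨k₁, k₂, k₃⟩ := h₅ σ i B p B' p' hB hB'
    exact ⟨k₁, k₂, hf.step _ (hP hB) _ _ k₃⟩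
  · rintro σ _ p ⟨B, hB, rfl⟩
    exact hE B (hP hB) (h₆ σ B p hB)
  · rintro σ i _ p _ q ⟨B, hB, rfl⟩ ⟨B', hB', rfl⟩ hq
    obtain ⟨n, ps, Ts, k₁, k₂, k₃⟩ := h₇ σ i B p B' q hB hB' hq
    choose C hC₁ hC₂ using k₃
    obtain rfl : (fun i => (C i).val) = Ts := funext hC₁
    exact ⟨n, ps, _, hf.cstep _ (hP hB) _ _ _ k₁, k₂, fun j => ⟨_, rfl, C j, hC₂ j, rfl⟩⟩
  · rintro σ i _ p _ ⟨B, hB, rfl⟩ ⟨B', hB', rfl⟩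
    obtain ⟨k₁, k₂, k₃⟩ := h₈ σ i B p B' hB hB'
    exact ⟨hf.step _ (hP hB) _ _ k₁, k₂, k₃⟩

lemma silentMap_residue (c : Chan) : SilentMap {A | ¬ A.val.FreeIn c} (residue c) where
  mem_step _ hA _ _ h hB := hA (h.freeIn.1 hB)
  step _ hA _ _ h := h.residue hA
  cstep _ _ _ _ _ h := h.residue

/-- A left inverse of `residue c`. -/
noncomputable def unresidue (c : Chan) (A : Proc Chan) : Proc Chan :=
  haveI : Nonempty (Proc Chan) := ⟨A⟩
  Function.invFun (residue c) A

lemma unresidue_residue (c : Chan) (A : Proc Chan) : unresidue c (residue c A) = A :=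
  haveI : Nonempty (Proc Chan) := ⟨A⟩
  Function.leftInverse_invFun (residue_injective c) A

lemma silentMap_unresidue (c : Chan) :
    SilentMap (residue c '' {A | ¬ A.val.FreeIn c}) (unresidue c) where
  mem_step := by
    rintro _ ⟨A, hA, rfl⟩ B p h
    obtain ⟨T, hT, hs⟩ := h.residue_inv
    obtain ⟨P, rfl, rfl⟩ := exists_residue_of_val_eq hT
    exact ⟨P, fun h => hA (hs.freeIn.1 h), rfl⟩
  step := by
    rintro _ ⟨A, hA, rfl⟩ B p h
    obtain ⟨T, hT, hs⟩ := h.residue_inv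
    obtain ⟨P, rfl, rfl⟩ := exists_residue_of_val_eq hT
    simpa only [unresidue_residue] using hs
  cstep := by
    rintro _ ⟨A, hA, rfl⟩ n ps C h
    obtain ⟨Ts, hT, hs⟩ := h.residue_inv
    choose P hP hC using fun i => exists_residue_of_val_eq (congrFun hT i)
    simp only [unresidue_residue, hC]
    rwa [funext hP]

/-! ### Invariance of the transition notions under residues -/

section Residue

variable {E : Proc Chan → Proc Chan → Prop} {c : Chan}

/-- `E` identifies every process without `c` with its residue. -/
def ResidueClosed (E : Proc Chan → Proc Chan → Prop) (c : Chan) : Prop :=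
  ∀ A : Proc Chan, ¬ A.val.FreeIn c → E A (residue c A)

lemma IsETree.map_residue (hE : Equivalence E) (hr : ResidueClosed E c) {A : Proc Chan}
    (hA : ¬ A.val.FreeIn c) {t : PTree Chan} (ht : IsETree E A t) :
    IsETree E (residue c A) (t.map (residue c)) :=
  ht.map (silentMap_residue c) hA fun B hB h =>
    hE.trans (hE.symm (hr A hA)) (hE.trans h (hr B hB))

lemma IsETree.map_unresidue (hE : Equivalence E) (hr : ResidueClosed E c) {A : Proc Chan}
    (hA : ¬ A.val.FreeIn c) {t : PTree Chan} (ht : IsETree E (residue c A) t) :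
    IsETree E A (t.map (unresidue c)) := by
  have := ht.map (silentMap_unresidue c) ⟨A, hA, rfl⟩ ?_
  · rwa [unresidue_residue] at this
  · rintro _ ⟨B, hB, rfl⟩ h
    simp only [unresidue_residue]
    exact hE.trans (hr A hA) (hE.trans h (hE.symm (hr B hB)))

lemma divergent_residue_iff (hE : Equivalence E) (hr : ResidueClosed E c) {A : Proc Chan}
    (hA : ¬ A.val.FreeIn c) :
    (∃ t, IsETree E A t ∧ t.Divergent) ↔ ∃ t, IsETree E (residue c A) t ∧ t.Divergent := by
  constructor
  · rintro ⟨t, ht, hd⟩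
    refine ⟨_, ht.map_residue hE hr hA, ?_⟩
    rwa [PTree.Divergent, PTree.map_finBranchProb]
  · rintro ⟨t, ht, hd⟩
    refine ⟨_, ht.map_unresidue hE hr hA, ?_⟩
    rwa [PTree.Divergent, PTree.map_finBranchProb]

lemma IsClass.mem_of_rel (hE : Equivalence E) {C : Set (Proc Chan)} (hC : IsClass E C)
    {A B : Proc Chan} (h : E A B) (hA : A ∈ C) : B ∈ C := by
  obtain ⟨D, rfl⟩ := hC
  exact hE.trans hA h

lemma IsClass.eq_classOf (hE : Equivalence E) {C : Set (Proc Chan)} (hC : IsClass E C)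
    {A : Proc Chan} (hA : A ∈ C) : C = classOf E A := by
  obtain ⟨D, rfl⟩ := hC
  exact Set.ext fun B => ⟨fun h => hE.trans (hE.symm hA) h, fun h => hE.trans hA h⟩

lemma classOf_eq (hE : Equivalence E) {A B : Proc Chan} (h : E A B) :
    classOf E A = classOf E B :=
  IsClass.eq_classOf hE ⟨A, rfl⟩ h

lemma lTrans_residue_iff (hE : Equivalence E) (hr : ResidueClosed E c) {A : Proc Chan}
    (hA : ¬ A.val.FreeIn c) {l : Lab Chan} {C : Set (Proc Chan)} (hC : IsClass E C) :
    LTrans E A l C ↔ LTrans E (residue c A) l C := by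
  constructor
  · rintro ⟨t, ht, hreg, hleaf⟩
    refine ⟨_, ht.map_residue hE hr hA, ?_, ?_⟩
    · rwa [PTree.Regular, PTree.map_finBranchProb]
    · simp only [PTree.map_node_eq_some, PTree.map_hasNode]
      rintro σ _ p ⟨L, hL, rfl⟩ hσ
      obtain ⟨L', hL', hs⟩ := hleaf σ L p hL hσ
      have hLc : ¬ L.val.FreeIn c := ht.mem_of_node (silentMap_residue c) hA hL
      exact ⟨residue c L', hC.mem_of_rel hE (hr L' fun h => hLc (hs.freeIn.1 h)) hL',
        hs.residue hLc⟩
  · rintro ⟨t, ht, hreg, hleaf⟩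
    refine ⟨_, ht.map_unresidue hE hr hA, ?_, ?_⟩
    · rwa [PTree.Regular, PTree.map_finBranchProb]
    · simp only [PTree.map_node_eq_some, PTree.map_hasNode]
      rintro σ _ p ⟨L, hL, rfl⟩ hσ
      obtain ⟨L', hL', hs⟩ := hleaf σ L p hL hσ
      obtain ⟨L, hLc, rfl⟩ := ht.mem_of_node (silentMap_unresidue c) ⟨A, hA, rfl⟩ hL
      obtain ⟨T, hT, hs'⟩ := hs.residue_inv
      obtain ⟨P, rfl, rfl⟩ := exists_residue_of_val_eq hT
      rw [unresidue_residue]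
      exact ⟨P, hC.mem_of_rel hE (hE.symm (hr P fun h => hLc (hs'.freeIn.1 h))) hL', hs'⟩

lemma inC_residue_iff (hE : Equivalence E) (hr : ResidueClosed E c) {C : Set (Proc Chan)}
    (hC : IsClass E C) {T : Tm Chan} (hT : ¬ T.FreeIn c) :
    inC C (.loc c (.par Tm.nil T)) ↔ inC C T := by
  constructor
  · rintro ⟨Q, hQ, hQT⟩
    obtain ⟨P, rfl, rfl⟩ := exists_residue_of_val_eq hQT
    exact ⟨P, hC.mem_of_rel hE (hE.symm (hr P hT)) hQ, rfl⟩
  · rintro ⟨P, hP, rfl⟩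
    exact ⟨residue c P, hC.mem_of_rel hE (hr P hT) hP, rfl⟩

open scoped Classical in
lemma collProb_residue (hE : Equivalence E) (hr : ResidueClosed E c) {C : Set (Proc Chan)}
    (hC : IsClass E C) {n : ℕ} {ps : Fin n → ℝ} {Ts : Fin n → Tm Chan}
    (hT : ∀ i, ¬ (Ts i).FreeIn c) :
    collProb C ps (fun i => .loc c (.par Tm.nil (Ts i))) = collProb C ps Ts := by
  exact Finset.sum_congr rfl fun i _ => if_congr (inC_residue_iff hE hr hC (hT i)) rfl rfl

lemma qTrans_residue_iff (hE : Equivalence E) (hr : ResidueClosed E c) {A : Proc Chan}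
    (hA : ¬ A.val.FreeIn c) {q : ℝ} {C : Set (Proc Chan)} (hC : IsClass E C) :
    QTrans E A q C ↔ QTrans E (residue c A) q C := by
  have hcl : classOf E (residue c A) = classOf E A := (classOf_eq hE (hr A hA)).symm
  constructor
  · rintro ⟨t, ht, hreg, hleaf⟩
    refine ⟨_, ht.map_residue hE hr hA, ?_, ?_⟩
    · rwa [PTree.Regular, PTree.map_finBranchProb]
    · simp only [PTree.map_node_eq_some, PTree.map_hasNode]
      rintro σ _ p ⟨L, hL, rfl⟩ hσ
      obtain ⟨n, ps, Ts, hs, hq⟩ := hleaf σ L p hL hσ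
      have hLc : ¬ L.val.FreeIn c := ht.mem_of_node (silentMap_residue c) hA hL
      have hTs : ∀ i, ¬ (Ts i).FreeIn c := fun i h => hLc ((hs.step i).freeIn.1 h)
      refine ⟨n, ps, _, hs.residue, ?_⟩
      rw [hcl, collProb_residue hE hr hC hTs, collProb_residue hE hr ⟨A, rfl⟩ hTs, hq]
  · rintro ⟨t, ht, hreg, hleaf⟩
    refine ⟨_, ht.map_unresidue hE hr hA, ?_, ?_⟩
    · rwa [PTree.Regular, PTree.map_finBranchProb]
    · simp only [PTree.map_node_eq_some, PTree.map_hasNode]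
      rintro σ _ p ⟨L, hL, rfl⟩ hσ
      obtain ⟨n, ps, Ts, hs, hq⟩ := hleaf σ L p hL hσ
      obtain ⟨L, hLc, rfl⟩ := ht.mem_of_node (silentMap_unresidue c) ⟨A, hA, rfl⟩ hL
      obtain ⟨Ts, rfl, hs'⟩ := hs.residue_inv
      have hTs : ∀ i, ¬ (Ts i).FreeIn c := fun i h => hLc ((hs'.step i).freeIn.1 h)
      rw [hcl, collProb_residue hE hr hC hTs, collProb_residue hE hr ⟨A, rfl⟩ hTs] at hq
      rw [unresidue_residue]
      exact ⟨n, ps, Ts, hs', hq⟩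

end Residue

/-! ### Unfolding a transition system into a tree -/

namespace PTree

section Unfold

variable {S : Type*} (lab : S → Proc Chan) (nxt : S → List (S × ℝ)) (s₀ : S)

/-- The state reached at an address when unfolding `nxt` from `s₀`, together with the
probability of its incoming edge. -/
def unfoldState : List ℕ → Option (S × ℝ)
  | [] => some (s₀, 1)
  | i :: σ => (unfoldState σ).bind fun x => (nxt x.1)[i]?

/-- The tree obtained by unfolding `nxt` from `s₀`, the state `s` carrying the label `lab s`. -/
def unfold : PTree Chan := ⟨fun σ => (unfoldState nxt s₀ σ).map fun x => (lab x.1, x.2)⟩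

variable {lab nxt s₀}

lemma unfoldState_cons {i : ℕ} {σ : List ℕ} {y : S × ℝ} :
    unfoldState nxt s₀ (i :: σ) = some y ↔
      ∃ s p, unfoldState nxt s₀ σ = some (s, p) ∧ (nxt s)[i]? = some y := by
  simp [unfoldState, Option.bind_eq_some_iff]

lemma unfold_node {σ : List ℕ} {B : Proc Chan} {p : ℝ} :
    (unfold lab nxt s₀).node σ = some (B, p) ↔
      ∃ s, unfoldState nxt s₀ σ = some (s, p) ∧ lab s = B := by
  simp [unfold]

lemma unfold_hasNode {σ : List ℕ} :
    (unfold lab nxt s₀).hasNode σ ↔ ∃ s p, unfoldState nxt s₀ σ = some (s, p) := by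
  simp [hasNode, unfold, Option.isSome_iff_exists]

lemma unfold_hasNode_cons {i : ℕ} {σ : List ℕ} {s : S} {p : ℝ}
    (h : unfoldState nxt s₀ σ = some (s, p)) :
    (unfold lab nxt s₀).hasNode (i :: σ) ↔ i < (nxt s).length := by
  simp [hasNode, unfold, unfoldState, h]

lemma unfold_isLeaf {σ : List ℕ} :
    (unfold lab nxt s₀).IsLeaf σ ↔
      ∃ s p, unfoldState nxt s₀ σ = some (s, p) ∧ nxt s = [] := by
  constructor
  · rintro ⟨h, h'⟩
    obtain ⟨s, p, h⟩ := unfold_hasNode.1 h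
    rw [unfold_hasNode_cons h] at h'
    exact ⟨s, p, h, List.length_eq_zero_iff.1 (by lia)⟩
  · rintro ⟨s, p, h, h'⟩
    refine ⟨unfold_hasNode.2 ⟨s, p, h⟩, ?_⟩
    simp [unfold_hasNode_cons h, h']

lemma unfold_pathProb_cons {i : ℕ} {σ : List ℕ} {s : S} {p : ℝ}
    (h : unfoldState nxt s₀ (i :: σ) = some (s, p)) :
    (unfold lab nxt s₀).pathProb (i :: σ) = p * (unfold lab nxt s₀).pathProb σ := by
  simp [pathProb, edgeProb, unfold, h]

variable (lab nxt) in
/-- The successors of `s` are none, the target of a single `τ`-transition, or the targets of a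
collective random transition. -/
def SilentAt (s : S) : Prop :=
  nxt s = [] ∨
  (∃ s', nxt s = [(s', 1)] ∧ Step (lab s).val (.tau 1) (lab s').val) ∨
  ∃ (n : ℕ) (ps : Fin n → ℝ) (ss : Fin n → S), nxt s = List.ofFn (fun i => (ss i, ps i)) ∧
    CStep (lab s).val n ps (fun i => (lab (ss i)).val) ∧ ∀ i, 0 < ps i ∧ ps i < 1

lemma isETree_unfold {E : Proc Chan → Proc Chan → Prop} (h : ∀ s, SilentAt lab nxt s)
    (hE : ∀ s, E (lab s₀) (lab s)) : IsETree E (lab s₀) (unfold lab nxt s₀) := by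
  refine ⟨⟨?_, ?_, ?_, ?_, ?_⟩, ?_, ?_, ?_⟩
  · exact unfold_node.2 ⟨s₀, rfl, rfl⟩
  · intro i σ hi
    obtain ⟨_, _, hi⟩ := unfold_hasNode.1 hi
    obtain ⟨s, p, hs, _⟩ := unfoldState_cons.1 hi
    exact unfold_hasNode.2 ⟨s, p, hs⟩
  · intro i j σ hij hi
    obtain ⟨_, _, hi'⟩ := unfold_hasNode.1 hi
    obtain ⟨s, p, hs, _⟩ := unfoldState_cons.1 hi'
    rw [unfold_hasNode_cons hs] at hi ⊢
    lia
  · intro σ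
    cases hσ : unfoldState nxt s₀ σ with
    | none => exact ⟨0, fun i _ => by simp [hasNode, unfold, unfoldState, hσ]⟩
    | some x =>
      refine ⟨(nxt x.1).length, fun i hi => ?_⟩
      rw [unfold_hasNode_cons hσ]
      lia
  · intro σ i B p B' p' hB hB'
    obtain ⟨s, hs, rfl⟩ := unfold_node.1 hB
    obtain ⟨s', hs', rfl⟩ := unfold_node.1 hB'
    simp only [unfoldState, hs, Option.bind_some] at hs'
    rcases h s with h | ⟨s₁, h, hst⟩ | ⟨n, ps, ss, h, hst, hp⟩
    · simp [h] at hs'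
    · rcases i with _ | i <;> simp [h] at hs'
      obtain ⟨rfl, rfl⟩ := hs'
      exact ⟨one_pos, le_rfl, hst⟩
    · rw [h, List.getElem?_ofFn] at hs'
      split_ifs at hs' with hi
      simp only [Option.some.injEq, Prod.mk.injEq] at hs'
      obtain ⟨rfl, rfl⟩ := hs'
      exact ⟨(hp _).1, (hp _).2.le, hst.step _⟩
  · intro σ B p hB
    obtain ⟨s, hs, rfl⟩ := unfold_node.1 hB
    exact hE s
  · intro σ i B p B' q hB hB' hq
    obtain ⟨s, hs, rfl⟩ := unfold_node.1 hB
    obtain ⟨s', hs', rfl⟩ := unfold_node.1 hB'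
    simp only [unfoldState, hs, Option.bind_some] at hs'
    rcases h s with h | ⟨s₁, h, hst⟩ | ⟨n, ps, ss, h, hst, hp⟩
    · simp [h] at hs'
    · rcases i with _ | i <;> simp [h] at hs'
      exact absurd hs'.2 hq.ne'
    · refine ⟨n, ps, _, hst, fun j => ?_, fun j => ⟨_, rfl, unfold_node.2 ⟨ss j, ?_, rfl⟩⟩⟩
      · rw [unfold_hasNode_cons hs, h, List.length_ofFn]
      · simp [unfoldState, hs, h]
  · intro σ i B p B' hB hB'
    obtain ⟨s, hs, rfl⟩ := unfold_node.1 hB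
    obtain ⟨s', hs', rfl⟩ := unfold_node.1 hB'
    simp only [unfoldState, hs, Option.bind_some] at hs'
    rw [unfold_hasNode_cons hs]
    rcases h s with h | ⟨s₁, h, hst⟩ | ⟨n, ps, ss, h, hst, hp⟩
    · simp [h] at hs'
    · rcases i with _ | i <;> simp [h] at hs'
      subst hs'
      exact ⟨hst, rfl, by simp [h]⟩
    · rw [h, List.getElem?_ofFn] at hs'
      split_ifs at hs' with hi
      simp only [Option.some.injEq, Prod.mk.injEq] at hs'
      exact absurd hs'.2 (hp _).2.ne

end Unfold

/-! ### Criteria for regularity and divergence -/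

lemma finBranchProb_eq_zero {t : PTree Chan} (h : ∀ σ, ¬ t.IsLeaf σ) (k : ℕ) :
    t.finBranchProb k = 0 := by
  simp [finBranchProb, h]

lemma divergent_of_forall_not_isLeaf {t : PTree Chan} (h : ∀ σ, ¬ t.IsLeaf σ) : t.Divergent := by
  rw [Divergent, funext (finBranchProb_eq_zero h)]
  exact tendsto_const_nhds

lemma Regular.exists_isLeaf {t : PTree Chan} (h : t.Regular) : ∃ σ, t.IsLeaf σ := by
  by_contra! hn
  exact zero_ne_one (tendsto_nhds_unique (divergent_of_forall_not_isLeaf hn) h)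

/-- A tree all of whose leaves are enumerated without repetition by `w`, with path
probabilities summing to `1`, is regular. -/
lemma regular_of_leaves {ι : Type*} {t : PTree Chan} {w : ι → List ℕ} {r : ι → ℝ}
    (hw : Function.Injective w) (hleaf : ∀ σ, t.IsLeaf σ ↔ ∃ n, w n = σ)
    (hp : ∀ n, t.pathProb (w n) = r n) (hr : ∀ n, 0 ≤ r n) (hsum : HasSum r 1) : t.Regular := by
  classical
  have key (k : ℕ) : t.finBranchProb k = ∑' n, if (w n).length ≤ k then r n else 0 := by
    rw [finBranchProb, ← hw.tsum_eq]
    · refine tsum_congr fun n => ?_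
      simp [(hleaf (w n)).2 ⟨n, rfl⟩, hp]
    · intro σ hσ
      by_contra hn
      exact hσ (if_neg fun h => hn ((hleaf σ).1 h.1))
  rw [Regular, funext key, ← hsum.tsum_eq]
  refine tendsto_tsum_of_dominated_convergence hsum.summable (fun n => ?_)
    (Filter.Eventually.of_forall fun k n => ?_)
  · refine tendsto_const_nhds.congr' ?_
    filter_upwards [Filter.eventually_ge_atTop (w n).length] with k hk
    rw [if_pos hk]
  · split_ifs
    · exact (abs_of_nonneg (hr n)).le
    · simpa using hr n

lemma regular_of_isLeaf_iff_eq_nil {t : PTree Chan} (h : ∀ σ, t.IsLeaf σ ↔ σ = []) :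
    t.Regular :=
  regular_of_leaves (ι := Unit) (w := fun _ => []) (r := fun _ => 1)
    (Function.injective_of_subsingleton _) (fun σ => by simp [h, eq_comm]) (fun _ => rfl)
    (fun _ => zero_le_one) (by simp)

end PTree

/-! ### Transitions of `H`, `H_a`, `H_b` and `E` -/

section Concrete

variable (a b c : Chan)

lemma inst_nil (k : ℕ) (S : Tm Chan) : Tm.inst k S Tm.nil = Tm.nil := by
  simp only [Tm.nil, Tm.inst, Tm.sum.injEq, heq_eq_eq, true_and]
  exact funext fun i => i.elim0

lemma inst_coNil (k : ℕ) (S : Tm Chan) : Tm.inst k S (coNil c) = coNil c := by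
  simp only [coNil, pfx, Tm.inst, inst_nil]

lemma inst_plusTau (S : Tm Chan) :
    Tm.inst 0 S (plusTau a c Tm.nil (.var 0)) = plusTau a c Tm.nil S := by
  simp only [plusTau, Tm.inst, inst_coNil, sum2, Tm.loc.injEq, Tm.par.injEq, Tm.sum.injEq,
    heq_eq_eq, true_and]
  funext i
  fin_cases i <;> simp [inst_nil, Tm.inst]

lemma inst_plus3 (S : Tm Chan) : Tm.inst 0 S (plus3 a b c (.var 0)) = plus3 a b c S := by
  simp only [plus3, Tm.inst, inst_coNil, Tm.loc.injEq, Tm.par.injEq, Tm.sum.injEq,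
    heq_eq_eq, true_and]
  funext i
  fin_cases i <;> simp [inst_nil, Tm.inst]

/-- The branches of the random choice in `H`: `H_a` for `true`, `H_b` for `false`. -/
noncomputable def branchP (g : Bool) : Proc Chan := cond g (HaP a b c) (HbP a b c)

lemma branchP_val (g : Bool) :
    (branchP a b c g).val = plusTau (cond g a b) c Tm.nil (Htm a b c) := by
  cases g <;> rfl

lemma inst_rand2 :
    Tm.inst 0 (Htm a b c)
      (rand2 (1/2) (1/2) (plusTau a c Tm.nil (.var 0)) (plusTau b c Tm.nil (.var 0))) =
    .rand 2 (fun _ => 1/2) (fun i => (branchP a b c (i == 0)).val) := by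
  simp only [rand2, Tm.inst, Tm.rand.injEq, heq_eq_eq, true_and]
  constructor <;> funext i <;> fin_cases i <;> simp [inst_plusTau, branchP_val]

lemma cstep_HP :
    CStep (HP a b c).val 2 (fun _ => 1/2) (fun i => (branchP a b c (i == 0)).val) := by
  refine .fix ?_
  change CStep (Tm.inst 0 (Htm a b c) _) _ _ _
  rw [inst_rand2]
  exact .rand

/-- `(c)(c̄.0 | 0)`, the inert process reached by an external action. -/
def deadP : Proc Chan :=
  ⟨.loc c (.par (coNil c) Tm.nil), by
    simp [coNil, pfx, Tm.nil, Tm.ClosedAt], by simp [coNil, pfx, Tm.nil, Tm.WF]⟩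

variable {a b c}

lemma step_coNil_inv {l : Lab Chan} {T : Tm Chan} (h : Step (coNil c) l T) :
    l = .coname c ∧ T = Tm.nil := by
  obtain ⟨i, rfl, rfl⟩ := h.sum_inv
  exact ⟨rfl, rfl⟩

lemma guardLab_eq_name {g : Chan ⊕ Chan} : guardLab g = .name c ↔ g = .inl c := by
  cases g <;> simp [guardLab]

/-- Transitions of a sum with a derived `τ`-prefix. -/
lemma step_loc_coNil_sum_inv {n : ℕ} {α : Fin n → Chan ⊕ Chan} {T : Fin n → Tm Chan}
    {l : Lab Chan} {T' : Tm Chan} (h : Step (.loc c (.par (coNil c) (.sum n α T))) l T') :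
    ∃ i, (α i = .inl c ∧ l = .tau 1 ∧ T' = .loc c (.par Tm.nil (T i))) ∨
      (α i ≠ .inl c ∧ l = guardLab (α i) ∧ T' = .loc c (.par (coNil c) (T i))) := by
  cases h with
  | loc _ h h₁ h₂ =>
    cases h with
    | comL h _ => cases (step_coNil_inv h).1
    | comR h h' =>
      obtain ⟨e, rfl⟩ := step_coNil_inv h
      cases e
      obtain ⟨i, hi, rfl⟩ := h'.sum_inv
      exact ⟨i, .inl ⟨guardLab_eq_name.1 hi.symm, rfl, rfl⟩⟩
    | parL h => exact absurd (step_coNil_inv h).1 h₂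
    | parR h =>
      obtain ⟨i, rfl, rfl⟩ := h.sum_inv
      exact ⟨i, .inr ⟨fun e => h₁ (guardLab_eq_name.2 e), rfl, rfl⟩⟩

lemma step_tau_loc_coNil_sum {n : ℕ} {α : Fin n → Chan ⊕ Chan} {T : Fin n → Tm Chan}
    (i : Fin n) (hi : α i = .inl c) :
    Step (.loc c (.par (coNil c) (.sum n α T))) (.tau 1) (.loc c (.par Tm.nil (T i))) := by
  refine .loc c (.comR (a := c) (.sum (T := fun _ => Tm.nil) (α := fun _ => .inr c) (0 : Fin 1)) ?_)
    (by simp) (by simp)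
  have := Step.sum (T := T) (α := α) i
  rwa [hi] at this

lemma step_name_loc_coNil_sum {n : ℕ} {α : Fin n → Chan ⊕ Chan} {T : Fin n → Tm Chan} {x : Chan}
    (i : Fin n) (hi : α i = .inl x) (hx : c ≠ x) :
    Step (.loc c (.par (coNil c) (.sum n α T))) (.name x) (.loc c (.par (coNil c) (T i))) := by
  refine .loc c (.parR ?_) (by simpa using hx.symm) (by simp)
  have := Step.sum (T := T) (α := α) i
  rwa [hi] at this

lemma step_tau_branchP (g : Bool) :
    Step (branchP a b c g).val (.tau 1) (residue c (HP a b c)).val := by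
  rw [branchP_val]
  exact step_tau_loc_coNil_sum (1 : Fin 2) rfl

lemma step_name_branchP (hca : c ≠ a) (hcb : c ≠ b) (g : Bool) :
    Step (branchP a b c g).val (.name (cond g a b)) (deadP c).val := by
  rw [branchP_val]
  exact step_name_loc_coNil_sum (0 : Fin 2) rfl (by cases g <;> assumption)

lemma step_tau_EP : Step (EP a b c).val (.tau 1) (residue c (EP a b c)).val := by
  refine .fix ?_
  rw [inst_plus3]
  exact step_tau_loc_coNil_sum (2 : Fin 3) rfl

lemma step_name_EP (hca : c ≠ a) (hcb : c ≠ b) (g : Bool) :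
    Step (EP a b c).val (.name (cond g a b)) (deadP c).val := by
  refine .fix ?_
  rw [inst_plus3]
  cases g
  · exact step_name_loc_coNil_sum (1 : Fin 3) rfl hcb
  · exact step_name_loc_coNil_sum (0 : Fin 3) rfl hca

lemma step_HP_inv {l : Lab Chan} {T : Tm Chan} (h : Step (HP a b c).val l T) :
    ∃ g, l = .tau (1/2) ∧ T = (branchP a b c g).val := by
  cases h with
  | fix h =>
    change Step (Tm.inst 0 (Htm a b c) _) _ _ at h
    rw [inst_rand2] at h
    cases h with
    | rand i => exact ⟨_, rfl, rfl⟩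

lemma step_branchP_inv (hca : c ≠ a) (hcb : c ≠ b) {g : Bool} {l : Lab Chan} {T : Tm Chan}
    (h : Step (branchP a b c g).val l T) :
    (l = .tau 1 ∧ T = (residue c (HP a b c)).val) ∨
      (l = .name (cond g a b) ∧ T = (deadP c).val) := by
  rw [branchP_val] at h
  obtain ⟨i, hi⟩ := step_loc_coNil_sum_inv h
  fin_cases i
  · rcases hi with ⟨e, _⟩ | ⟨_, rfl, rfl⟩
    · cases g
      · exact absurd (Sum.inl.inj e).symm hcb
      · exact absurd (Sum.inl.inj e).symm hca
    · exact .inr ⟨rfl, rfl⟩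
  · rcases hi with ⟨_, rfl, rfl⟩ | ⟨h, _⟩
    · exact .inl ⟨rfl, rfl⟩
    · exact absurd rfl h

lemma step_EP_inv (hca : c ≠ a) (hcb : c ≠ b) {l : Lab Chan} {T : Tm Chan} (h : Step (EP a b c).val l T) :
    (l = .tau 1 ∧ T = (residue c (EP a b c)).val) ∨
      ((∃ g, l = .name (cond g a b)) ∧ T = (deadP c).val) := by
  cases h with
  | fix h =>
    rw [inst_plus3] at h
    obtain ⟨i, hi⟩ := step_loc_coNil_sum_inv h
    fin_cases i
    · rcases hi with ⟨e, _⟩ | ⟨_, rfl, rfl⟩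
      · exact absurd (Sum.inl.inj e).symm hca
      · exact .inr ⟨⟨true, rfl⟩, rfl⟩
    · rcases hi with ⟨e, _⟩ | ⟨_, rfl, rfl⟩
      · exact absurd (Sum.inl.inj e).symm hcb
      · exact .inr ⟨⟨false, rfl⟩, rfl⟩
    · rcases hi with ⟨_, rfl, rfl⟩ | ⟨h, _⟩
      · exact .inl ⟨rfl, rfl⟩
      · exact absurd rfl h

end Concrete

/-! ### The class of `H` -/

section HClass

/-- The processes `H`, `H_a`, `H_b`, `E`, up to residues. -/
inductive Kind
  | spin
  | branch (g : Bool)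
  | ext

open Kind

/-- The process of a given kind. -/
noncomputable def Kind.proc (a b c : Chan) : Kind → Proc Chan
  | spin => HP a b c
  | branch g => branchP a b c g
  | ext => EP a b c

/-- The process of kind `s.1` inside `s.2` residues. -/
noncomputable def stateP (a b c : Chan) (s : Kind × ℕ) : Proc Chan :=
  (residue c)^[s.2] (s.1.proc a b c)

/-- The strategy that performs silent transitions for ever if `o = none`, and that stops where
the action `a` (for `o = some true`) or `b` (for `o = some false`) is available otherwise. -/
noncomputable def strategy (o : Option Bool) : Kind × ℕ → List ((Kind × ℕ) × ℝ)
  | (spin, n) => [((branch true, n), 1/2), ((branch false, n), 1/2)]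
  | (branch g, n) => if o = some g then [] else [((spin, n + 1), 1)]
  | (ext, n) => if o = none then [((ext, n + 1), 1)] else []

variable {a b c : Chan}

lemma Kind.not_freeIn_proc (k : Kind) : ¬ (k.proc a b c).val.FreeIn c := by
  rcases k with _ | g | _
  · simp [Kind.proc, HP, Htm, rand2, plusTau, Tm.FreeIn]
  · rw [Kind.proc, branchP_val]
    exact fun h => h.1 rfl
  · simp [Kind.proc, EP, Etm, plus3, Tm.FreeIn]

lemma not_freeIn_deadP : ¬ (deadP c).val.FreeIn c := fun h => h.1 rfl

lemma not_freeIn_iterate_residue {A : Proc Chan} (hA : ¬ A.val.FreeIn c) (n : ℕ) :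
    ¬ ((residue c)^[n] A).val.FreeIn c := by
  cases n with
  | zero => exact hA
  | succ n =>
    rw [Function.iterate_succ_apply']
    exact not_freeIn_residue c _

lemma step_iterate_residue {A B : Proc Chan} {l : Lab Chan} (hA : ¬ A.val.FreeIn c)
    (h : Step A.val l B.val) (n : ℕ) :
    Step ((residue c)^[n] A).val l ((residue c)^[n] B).val := by
  induction n with
  | zero => exact h
  | succ n ih =>
    simp only [Function.iterate_succ_apply']
    exact ih.residue (not_freeIn_iterate_residue hA n)

lemma cstep_iterate_residue {A : Proc Chan} {m : ℕ} {ps : Fin m → ℝ} {C : Fin m → Proc Chan}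
    (h : CStep A.val m ps fun i => (C i).val) (n : ℕ) :
    CStep ((residue c)^[n] A).val m ps fun i => ((residue c)^[n] (C i)).val := by
  induction n with
  | zero => exact h
  | succ n ih =>
    simp only [Function.iterate_succ_apply']
    exact ih.residue

lemma rel_iterate_residue {E : Proc Chan → Proc Chan → Prop} (hE : Equivalence E)
    (hr : ResidueClosed E c) {A : Proc Chan} (hA : ¬ A.val.FreeIn c) (n : ℕ) :
    E A ((residue c)^[n] A) := by
  induction n with
  | zero => exact hE.refl A
  | succ n ih =>
    rw [Function.iterate_succ_apply']
    exact hE.trans ih (hr _ (not_freeIn_iterate_residue hA n))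

lemma stateP_succ (k : Kind) (n : ℕ) :
    stateP a b c (k, n + 1) = residue c (stateP a b c (k, n)) :=
  Function.iterate_succ_apply' _ _ _

lemma silentAt_strategy (o : Option Bool) (s : Kind × ℕ) :
    PTree.SilentAt (stateP a b c) (strategy o) s := by
  rcases s with ⟨_ | g | _, n⟩
  · refine .inr (.inr ⟨2, fun _ => 1/2, fun i => (branch (i == 0), n), ?_, ?_, fun _ => by norm_num⟩)
    · simp [strategy, List.ofFn_succ]
    · exact cstep_iterate_residue (cstep_HP a b c) n
  · by_cases h : o = some g
    · exact .inl (by simp [strategy, h])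
    · refine .inr (.inl ⟨(spin, n + 1), by simp [strategy, h], ?_⟩)
      exact step_iterate_residue (Kind.not_freeIn_proc (branch g)) (step_tau_branchP g) n
  · by_cases h : o = none
    · refine .inr (.inl ⟨(ext, n + 1), by simp [strategy, h], ?_⟩)
      exact step_iterate_residue (Kind.not_freeIn_proc ext) step_tau_EP n
    · exact .inl (by simp [strategy, h])

/-! ### Leaves of the unfolded strategies -/

lemma strategy_ne_nil_of_none (s : Kind × ℕ) : strategy none s ≠ [] := by
  rcases s with ⟨_ | g | _, n⟩ <;> simp [strategy]

lemma divergent_unfold_strategy (lab : Kind × ℕ → Proc Chan) (s : Kind × ℕ) :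
    (PTree.unfold lab (strategy none) s).Divergent :=
  PTree.divergent_of_forall_not_isLeaf fun _ h =>
    have ⟨s, _, _, hs⟩ := PTree.unfold_isLeaf.1 h
    strategy_ne_nil_of_none s hs

/-- The position of a branch in the random choice of `H`. -/
def branchIdx (g : Bool) : ℕ := cond g 0 1

/-- The address of the `n`-th return to `H` when the branch `g` stops, `base` being the
address of the first visit. -/
def spinAddr (g : Bool) (base : List ℕ) : ℕ → List ℕ
  | 0 => base
  | n + 1 => 0 :: branchIdx (!g) :: spinAddr g base n

lemma strategy_getElem?_spin {g : Bool} {s : Kind × ℕ} {i n : ℕ} {p : ℝ}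
    (h : (strategy (some g) s)[i]? = some ((spin, n), p)) :
    i = 0 ∧ ∃ m, n = m + 1 ∧ s = (branch (!g), m) := by
  rcases s with ⟨_ | g' | _, m⟩
  · rcases i with _ | _ | i <;> simp [strategy] at h
  · rcases i with _ | i <;> cases g <;> cases g' <;> simp_all [strategy]
  · simp [strategy] at h

lemma strategy_getElem?_branch {o : Option Bool} {g : Bool} {s : Kind × ℕ} {i n : ℕ} {p : ℝ}
    (h : (strategy o s)[i]? = some ((branch g, n), p)) :
    i = branchIdx g ∧ s = (spin, n) := by
  rcases s with ⟨_ | g' | _, m⟩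
  · rcases i with _ | _ | i <;> simp [strategy] at h <;>
      obtain ⟨⟨rfl, rfl⟩, -⟩ := h <;> exact ⟨rfl, rfl⟩
  · by_cases ho : o = some g' <;> rcases i with _ | i <;> simp [strategy, ho] at h
  · by_cases ho : o = none <;> rcases i with _ | i <;> simp [strategy, ho] at h

lemma strategy_getElem?_ext {g : Bool} {s : Kind × ℕ} {i n : ℕ} {p : ℝ} :
    (strategy (some g) s)[i]? ≠ some ((ext, n), p) := by
  intro h
  rcases s with ⟨_ | g' | _, m⟩
  · rcases i with _ | _ | i <;> simp [strategy] at h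
  · by_cases ho : some g = some g' <;> rcases i with _ | i <;> simp [strategy, ho] at h
  · simp [strategy] at h

lemma regular_of_spinAddr {g : Bool} (lab : Kind × ℕ → Proc Chan) {s₀ : Kind × ℕ}
    {base : List ℕ}
    (hs : (s₀ = (spin, 0) ∧ base = []) ∨ (s₀ = (branch (!g), 0) ∧ base = [0])) :
    (PTree.unfold lab (strategy (some g)) s₀).Regular := by
  have hbase : ∃ m, PTree.unfoldState (strategy (some g)) s₀ base = some ((spin, m), 1) := by
    rcases hs with ⟨rfl, rfl⟩ | ⟨rfl, rfl⟩
    · exact ⟨0, rfl⟩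
    · exact ⟨1, by cases g <;> simp [PTree.unfoldState, strategy]⟩
  have hspin {m : ℕ} {p : ℝ} {σ : List ℕ}
      (h : PTree.unfoldState (strategy (some g)) s₀ σ = some ((spin, m), p)) :
      (PTree.unfoldState (strategy (some g)) s₀ (branchIdx g :: σ) =
        some ((branch g, m), 1/2)) ∧
      (PTree.unfoldState (strategy (some g)) s₀ (branchIdx (!g) :: σ) =
        some ((branch (!g), m), 1/2)) ∧
      (PTree.unfoldState (strategy (some g)) s₀ (0 :: branchIdx (!g) :: σ) =
        some ((spin, m + 1), 1)) := by
    cases g <;> simp [PTree.unfoldState, h, strategy, branchIdx]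
  have hpath (n : ℕ) : ∃ m,
      PTree.unfoldState (strategy (some g)) s₀ (spinAddr g base n) = some ((spin, m), 1) ∧
      (PTree.unfold lab (strategy (some g)) s₀).pathProb (spinAddr g base n) = (1/2) ^ n := by
    induction n with
    | zero =>
      obtain ⟨m, hm⟩ := hbase
      refine ⟨m, hm, ?_⟩
      rcases hs with ⟨rfl, rfl⟩ | ⟨rfl, rfl⟩
      · rfl
      · rw [spinAddr, PTree.unfold_pathProb_cons hm]
        simp [PTree.pathProb]
    | succ n ih =>
      obtain ⟨m, hm, hp⟩ := ih
      refine ⟨m + 1, (hspin hm).2.2, ?_⟩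
      rw [spinAddr, PTree.unfold_pathProb_cons (hspin hm).2.2,
        PTree.unfold_pathProb_cons (hspin hm).2.1, hp]
      ring
  have haddr (m : ℕ) : ∀ (σ : List ℕ) (p : ℝ),
      PTree.unfoldState (strategy (some g)) s₀ σ = some ((spin, m), p) →
      ∃ n, spinAddr g base n = σ := by
    induction m with
    | zero =>
      rintro (_ | ⟨i, σ⟩) p h
      · rcases hs with ⟨rfl, rfl⟩ | ⟨rfl, rfl⟩
        · exact ⟨0, rfl⟩
        · simp [PTree.unfoldState] at h
      · obtain ⟨s, q, _, h⟩ := PTree.unfoldState_cons.1 h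
        obtain ⟨_, m, hm, _⟩ := strategy_getElem?_spin h
        simp at hm
    | succ m ih =>
      rintro (_ | ⟨i, σ⟩) p h
      · rcases hs with ⟨rfl, rfl⟩ | ⟨rfl, rfl⟩ <;> simp [PTree.unfoldState] at h
      · obtain ⟨s, q, hσ, h⟩ := PTree.unfoldState_cons.1 h
        obtain ⟨rfl, m', hm, rfl⟩ := strategy_getElem?_spin h
        obtain rfl : m = m' := by lia
        rcases σ with _ | ⟨j, σ⟩
        · rcases hs with ⟨rfl, rfl⟩ | ⟨rfl, rfl⟩
          · simp [PTree.unfoldState] at hσ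
          · exact ⟨0, rfl⟩
        · obtain ⟨s, q, hσ', h⟩ := PTree.unfoldState_cons.1 hσ
          obtain ⟨rfl, rfl⟩ := strategy_getElem?_branch h
          obtain ⟨n, rfl⟩ := ih σ q hσ'
          exact ⟨n + 1, rfl⟩
  have hlen (n : ℕ) : (spinAddr g base n).length = 2 * n + base.length := by
    induction n with
    | zero => simp [spinAddr]
    | succ n ih =>
      simp only [spinAddr, List.length_cons, ih]
      ring
  refine PTree.regular_of_leaves (w := fun n => branchIdx g :: spinAddr g base n)
    (r := fun n => 1 / 2 * (1/2) ^ n) ?_ ?_ ?_ ?_ ?_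
  · intro m n h
    have := congrArg List.length h
    simp only [List.length_cons, hlen] at this
    lia
  · intro σ
    rw [PTree.unfold_isLeaf]
    constructor
    · rintro ⟨⟨_ | g' | _, m⟩, p, h, hnil⟩
      · simp [strategy] at hnil
      · obtain rfl : g = g' := by
          by_contra hg
          simp [strategy, hg] at hnil
        rcases σ with _ | ⟨i, σ⟩
        · rcases hs with ⟨rfl, rfl⟩ | ⟨rfl, rfl⟩ <;> simp [PTree.unfoldState] at h
        · obtain ⟨s, q, hσ, h⟩ := PTree.unfoldState_cons.1 h
          obtain ⟨rfl, rfl⟩ := strategy_getElem?_branch h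
          obtain ⟨n, rfl⟩ := haddr m σ q hσ
          exact ⟨n, rfl⟩
      · rcases σ with _ | ⟨i, σ⟩
        · rcases hs with ⟨rfl, rfl⟩ | ⟨rfl, rfl⟩ <;> simp [PTree.unfoldState] at h
        · obtain ⟨s, q, _, h⟩ := PTree.unfoldState_cons.1 h
          exact (strategy_getElem?_ext h).elim
    · rintro ⟨n, rfl⟩
      obtain ⟨m, hm, _⟩ := hpath n
      exact ⟨_, _, (hspin hm).1, by simp [strategy]⟩
  · intro n
    obtain ⟨m, hm, hp⟩ := hpath n
    rw [PTree.unfold_pathProb_cons (hspin hm).1, hp]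
  · intro n
    positivity
  · simpa using hasSum_geometric_two.mul_left (2⁻¹ : ℝ)

lemma regular_of_strategy_eq_nil (lab : Kind × ℕ → Proc Chan) {o : Option Bool} {s₀ : Kind × ℕ}
    (h : strategy o s₀ = []) : (PTree.unfold lab (strategy o) s₀).Regular := by
  refine PTree.regular_of_isLeaf_iff_eq_nil fun σ => ?_
  rw [PTree.unfold_isLeaf]
  constructor
  · rintro ⟨s, p, hs, _⟩
    have aux (σ : List ℕ) : σ ≠ [] → PTree.unfoldState (strategy o) s₀ σ = none := by
      induction σ with
      | nil => simp
      | cons i σ ih =>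
        intro _
        rcases σ with _ | ⟨j, σ⟩
        · simp [PTree.unfoldState, h]
        · rw [PTree.unfoldState, ih (by simp)]
          rfl
    by_contra hσ
    simp [aux σ hσ] at hs
  · rintro rfl
    exact ⟨s₀, 1, rfl, h⟩

lemma regular_unfold_strategy (lab : Kind × ℕ → Proc Chan) (g : Bool) (k : Kind) :
    (PTree.unfold lab (strategy (some g)) (k, 0)).Regular := by
  rcases k with _ | g' | _
  · exact regular_of_spinAddr lab (.inl ⟨rfl, rfl⟩)
  · by_cases h : g' = g
    · exact regular_of_strategy_eq_nil lab (by simp [strategy, h])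
    · obtain rfl : g' = !g := by cases g <;> cases g' <;> simp_all
      exact regular_of_spinAddr lab (.inr ⟨rfl, rfl⟩)
  · exact regular_of_strategy_eq_nil lab (by simp [strategy])

/-! ### The bisimulation -/

variable {E : Proc Chan → Proc Chan → Prop}

lemma exists_divergent_proc (hE : ∀ s s', E (stateP a b c s) (stateP a b c s')) (k : Kind) :
    ∃ t, IsETree E (k.proc a b c) t ∧ t.Divergent :=
  ⟨_, PTree.isETree_unfold (lab := stateP a b c) (s₀ := (k, 0)) (silentAt_strategy none)
    (hE _), divergent_unfold_strategy _ _⟩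

lemma lTrans_proc (hca : c ≠ a) (hcb : c ≠ b) (hEq : Equivalence E) (hr : ResidueClosed E c)
    (hE : ∀ s s', E (stateP a b c s) (stateP a b c s')) (g : Bool) (k : Kind) :
    LTrans E (k.proc a b c) (.name (cond g a b)) (classOf E (deadP c)) := by
  refine ⟨_, PTree.isETree_unfold (lab := stateP a b c) (s₀ := (k, 0))
    (silentAt_strategy (some g)) (hE _), regular_unfold_strategy _ g k, ?_⟩
  intro σ L p hL hleaf
  obtain ⟨s, hs, rfl⟩ := PTree.unfold_node.1 hL
  rw [PTree.unfold_hasNode_cons hs] at hleaf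
  have hdead (n : ℕ) : (residue c)^[n] (deadP c) ∈ classOf E (deadP c) :=
    rel_iterate_residue hEq hr not_freeIn_deadP n
  rcases s with ⟨_ | g' | _, n⟩
  · simp [strategy] at hleaf
  · obtain rfl : g = g' := by
      by_contra hg
      simp [strategy, hg] at hleaf
    exact ⟨_, hdead n, step_iterate_residue (Kind.not_freeIn_proc (branch g))
      (step_name_branchP hca hcb g) n⟩
  · exact ⟨_, hdead n, step_iterate_residue (Kind.not_freeIn_proc ext)
      (step_name_EP hca hcb g) n⟩

lemma step_stateP_inv (hca : c ≠ a) (hcb : c ≠ b) {k : Kind} {n : ℕ} {l : Lab Chan} {T : Tm Chan}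
    (h : Step (stateP a b c (k, n)).val l T) :
    (∃ p s, l = .tau p ∧ T = (stateP a b c s).val) ∨
      ∃ g m, l = .name (cond g a b) ∧ T = ((residue c)^[m] (deadP c)).val := by
  induction n generalizing T with
  | zero =>
    rcases k with _ | g | _
    · obtain ⟨g, rfl, rfl⟩ := step_HP_inv h
      exact .inl ⟨_, (branch g, 0), rfl, rfl⟩
    · rcases step_branchP_inv hca hcb h with ⟨rfl, rfl⟩ | ⟨rfl, rfl⟩
      · exact .inl ⟨_, (spin, 1), rfl, rfl⟩
      · exact .inr ⟨g, 0, rfl, rfl⟩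
    · rcases step_EP_inv hca hcb h with ⟨rfl, rfl⟩ | ⟨⟨g, rfl⟩, rfl⟩
      · exact .inl ⟨_, (ext, 1), rfl, rfl⟩
      · exact .inr ⟨g, 0, rfl, rfl⟩
  | succ n ih =>
    rw [stateP_succ] at h
    obtain ⟨T, rfl, h'⟩ := h.residue_inv
    rcases ih h' with ⟨p, ⟨k', m⟩, rfl, rfl⟩ | ⟨g, m, rfl, rfl⟩
    · exact .inl ⟨p, (k', m + 1), rfl, by rw [stateP_succ]; rfl⟩
    · exact .inr ⟨g, m + 1, rfl, by rw [Function.iterate_succ_apply']; rfl⟩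

lemma lTrans_proc_inv (hca : c ≠ a) (hcb : c ≠ b) (hEq : Equivalence E) (hr : ResidueClosed E c)
    (hE : ∀ s s', E (stateP a b c s) (stateP a b c s'))
    (hcl : ∀ s A, E (stateP a b c s) A → ∃ s', A = stateP a b c s')
    {k : Kind} {l : Lab Chan} {C : Set (Proc Chan)} (hl : l.IsAct) (hC : IsClass E C)
    (hlC : l ≠ .tau 1 ∨ C ≠ classOf E (k.proc a b c)) (h : LTrans E (k.proc a b c) l C) :
    C = classOf E (deadP c) ∧ ∃ g, l = .name (cond g a b) := by
  obtain ⟨t, ht, hreg, hleaf⟩ := h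
  obtain ⟨σ, hσ, hσ'⟩ := hreg.exists_isLeaf
  obtain ⟨⟨L, p⟩, hL⟩ := Option.isSome_iff_exists.1 hσ
  obtain ⟨L', hL', hs⟩ := hleaf σ L p hL hσ'
  obtain ⟨s, rfl⟩ := hcl (k, 0) L (ht.2.1 σ L p hL)
  rcases step_stateP_inv hca hcb hs with ⟨p, s', rfl, e⟩ | ⟨g, m, rfl, e⟩ <;>
    obtain rfl := Subtype.ext e
  · obtain rfl : p = 1 := hl
    refine (hlC.elim (· rfl) fun h => h ?_).elim
    rw [hC.eq_classOf hEq hL']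
    exact classOf_eq hEq (hE s' (k, 0))
  · refine ⟨?_, g, rfl⟩
    rw [hC.eq_classOf hEq hL']
    exact (classOf_eq hEq (rel_iterate_residue hEq hr not_freeIn_deadP m)).symm

lemma not_qTrans_proc (hca : c ≠ a) (hcb : c ≠ b) (hEq : Equivalence E)
    (hE : ∀ s s', E (stateP a b c s) (stateP a b c s'))
    (hcl : ∀ s A, E (stateP a b c s) A → ∃ s', A = stateP a b c s')
    {k : Kind} {q : ℝ} {C : Set (Proc Chan)} (hq : 0 < q) (hC : IsClass E C)
    (hkC : C ≠ classOf E (k.proc a b c)) : ¬ QTrans E (k.proc a b c) q C := by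
  rintro ⟨t, ht, hreg, hleaf⟩
  obtain ⟨σ, hσ, hσ'⟩ := hreg.exists_isLeaf
  obtain ⟨⟨L, p⟩, hL⟩ := Option.isSome_iff_exists.1 hσ
  obtain ⟨n, ps, Ts, hs, hsum⟩ := hleaf σ L p hL hσ'
  obtain ⟨s, rfl⟩ := hcl (k, 0) L (ht.2.1 σ L p hL)
  have hzero : collProb C ps Ts = 0 := by
    refine Finset.sum_eq_zero fun i _ => if_neg ?_
    rintro ⟨P, hP, hPT⟩
    rcases step_stateP_inv hca hcb (hs.step i) with ⟨_, s', _, e⟩ | ⟨g, m, e, _⟩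
    · obtain rfl := Subtype.ext (hPT.trans e)
      refine hkC ?_
      rw [hC.eq_classOf hEq hP]
      exact classOf_eq hEq (hE s' (k, 0))
    · cases e
  rw [hzero, zero_div] at hsum
  exact hq.ne hsum

end HClass

/-- An equivalence generated by a set of pairs is a codivergent branching bisimulation if
divergence and the two kinds of transitions agree on every generating pair. -/
lemma isCBB_eqvGen {r : Proc Chan → Proc Chan → Prop}
    (hd : ∀ A B, r A B → ((∃ t, IsETree (Relation.EqvGen r) A t ∧ t.Divergent) ↔
      ∃ t, IsETree (Relation.EqvGen r) B t ∧ t.Divergent))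
    (hl : ∀ A B l C, l.IsAct → IsClass (Relation.EqvGen r) C → r A B →
      (l ≠ Lab.tau 1 ∨ C ≠ classOf (Relation.EqvGen r) A) →
      (LTrans (Relation.EqvGen r) A l C ↔ LTrans (Relation.EqvGen r) B l C))
    (hq : ∀ A B q C, 0 < q → IsClass (Relation.EqvGen r) C → r A B →
      C ≠ classOf (Relation.EqvGen r) A →
      (QTrans (Relation.EqvGen r) A q C ↔ QTrans (Relation.EqvGen r) B q C)) :
    IsCBB (Relation.EqvGen r) := by
  have hE := Relation.EqvGen.is_equivalence r
  refine ⟨⟨hE, ?_, ?_⟩, ?_⟩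
  · intro A B l C hact hC hAB hne
    refine Iff.mp ?_
    induction hAB with
    | rel A B h => exact hl A B l C hact hC h hne
    | refl A => exact Iff.rfl
    | symm A B h ih => exact (ih (by rwa [classOf_eq hE h])).symm
    | trans A B D h₁ h₂ ih₁ ih₂ =>
      exact (ih₁ hne).trans (ih₂ (by rwa [← classOf_eq hE h₁]))
  · intro A B q C hpos _ hC hAB hne
    refine Iff.mp ?_
    induction hAB with
    | rel A B h => exact hq A B q C hpos hC h hne
    | refl A => exact Iff.rfl
    | symm A B h ih => exact (ih (by rwa [classOf_eq hE h])).symm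
    | trans A B D h₁ h₂ ih₁ ih₂ =>
      exact (ih₁ hne).trans (ih₂ (by rwa [← classOf_eq hE h₁]))
  · intro A B hAB
    induction hAB with
    | rel A B h => exact hd A B h
    | refl A => exact Iff.rfl
    | symm A B h ih => exact ih.symm
    | trans A B D h₁ h₂ ih₁ ih₂ => exact ih₁.trans ih₂

/-- A residue of the class of `H` is a residue of one of its members. -/
lemma exists_stateP_of_residue {a b c : Chan} {A : Proc Chan} {s : Kind × ℕ}
    (h : residue c A = stateP a b c s) : ∃ s', A = stateP a b c s' := by
  obtain ⟨k, _ | n⟩ := s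
  · have h' : Tm.loc c (.par Tm.nil A.val) = (k.proc a b c).val := congrArg Subtype.val h
    rcases k with _ | g | _
    · exact nomatch h'
    · rw [Kind.proc, branchP_val] at h'
      simp [plusTau, coNil, pfx, Tm.nil] at h'
    · exact nomatch h'
  · rw [stateP_succ] at h
    exact ⟨_, residue_injective c h⟩

/-- Let `a`, `b`, `c` be distinct channels, with `c` the fresh channel used in the derived `τ`-prefix.
The equivalence closure of `{(H, H_a), (H, H_b), (H, E)}`, taken modulo the identification of
`A` with the residue `(c)(0 | A)` of a derived `τ`-prefix (`c` not free in `A`), is a codivergent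
branching bisimulation on `P_RCCS`; in particular `H =_RCCS E`. -/
theorem H_eq_E {Chan : Type*} (a b c : Chan)
    (hab : a ≠ b) (hca : c ≠ a) (hcb : c ≠ b) :
    IsCBB (Relation.EqvGen fun x y : Proc Chan =>
      (x = HP a b c ∧ y = HaP a b c) ∨ (x = HP a b c ∧ y = HbP a b c) ∨
      (x = HP a b c ∧ y = EP a b c) ∨
      (¬ Tm.FreeIn c x.val ∧ y = residue c x)) ∧
    RccsEq (HP a b c) (EP a b c) := by
  set r : Proc Chan → Proc Chan → Prop := fun x y =>
    (x = HP a b c ∧ y = HaP a b c) ∨ (x = HP a b c ∧ y = HbP a b c) ∨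
    (x = HP a b c ∧ y = EP a b c) ∨ (¬ Tm.FreeIn c x.val ∧ y = residue c x)
  have hEq := Relation.EqvGen.is_equivalence r
  have hr : ResidueClosed (Relation.EqvGen r) c := fun A hA =>
    .rel _ _ (.inr (.inr (.inr ⟨hA, rfl⟩)))
  have hHE : Relation.EqvGen r (HP a b c) (EP a b c) := .rel _ _ (.inr (.inr (.inl ⟨rfl, rfl⟩)))
  have hH (s : Kind × ℕ) : Relation.EqvGen r (HP a b c) (stateP a b c s) := by
    refine hEq.trans ?_ (rel_iterate_residue hEq hr s.1.not_freeIn_proc s.2)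
    rcases s with ⟨_ | (_ | _) | _, n⟩
    · exact hEq.refl _
    · exact .rel _ _ (.inr (.inl ⟨rfl, rfl⟩))
    · exact .rel _ _ (.inl ⟨rfl, rfl⟩)
    · exact hHE
  have hE (s s' : Kind × ℕ) : Relation.EqvGen r (stateP a b c s) (stateP a b c s') :=
    hEq.trans (hEq.symm (hH s)) (hH s')
  have hcases {A B : Proc Chan} (h : r A B) :
      (∃ k k' : Kind, A = k.proc a b c ∧ B = k'.proc a b c) ∨
        (¬ A.val.FreeIn c ∧ B = residue c A) := by
    rcases h with h | h | h | h
    · exact .inl ⟨.spin, .branch true, h⟩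
    · exact .inl ⟨.spin, .branch false, h⟩
    · exact .inl ⟨.spin, .ext, h⟩
    · exact .inr h
  have hcl_iff {A B : Proc Chan} (h : Relation.EqvGen r A B) :
      (∃ s, A = stateP a b c s) ↔ ∃ s, B = stateP a b c s := by
    induction h with
    | rel A B h =>
      rcases hcases h with ⟨k, k', rfl, rfl⟩ | ⟨_, rfl⟩
      · exact ⟨fun _ => ⟨(k', 0), rfl⟩, fun _ => ⟨(k, 0), rfl⟩⟩
      · refine ⟨?_, fun ⟨s, hs⟩ => exists_stateP_of_residue hs⟩
        rintro ⟨⟨k, n⟩, rfl⟩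
        exact ⟨(k, n + 1), (stateP_succ k n).symm⟩
    | refl A => exact Iff.rfl
    | symm A B h ih => exact ih.symm
    | trans A B D h₁ h₂ ih₁ ih₂ => exact ih₁.trans ih₂
  have hcl (s : Kind × ℕ) (A : Proc Chan) (h : Relation.EqvGen r (stateP a b c s) A) :
      ∃ s', A = stateP a b c s' := (hcl_iff h).1 ⟨s, rfl⟩
  have hcbb : IsCBB (Relation.EqvGen r) := by
    refine isCBB_eqvGen ?_ ?_ ?_
    · intro A B h
      rcases hcases h with ⟨k, k', rfl, rfl⟩ | ⟨hA, rfl⟩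
      · exact iff_of_true (exists_divergent_proc hE k) (exists_divergent_proc hE k')
      · exact divergent_residue_iff hEq hr hA
    · intro A B l C hl hC h hne
      rcases hcases h with ⟨k, k', rfl, rfl⟩ | ⟨hA, rfl⟩
      · have hkk : classOf (Relation.EqvGen r) (k.proc a b c) =
          classOf (Relation.EqvGen r) (k'.proc a b c) := classOf_eq hEq (hE (k, 0) (k', 0))
        constructor
        · intro h
          obtain ⟨rfl, g, rfl⟩ := lTrans_proc_inv hca hcb hEq hr hE hcl hl hC hne h
          exact lTrans_proc hca hcb hEq hr hE g k'
        · intro h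
          rw [hkk] at hne
          obtain ⟨rfl, g, rfl⟩ := lTrans_proc_inv hca hcb hEq hr hE hcl hl hC hne h
          exact lTrans_proc hca hcb hEq hr hE g k
      · exact lTrans_residue_iff hEq hr hA hC
    · intro A B q C hq hC h hne
      rcases hcases h with ⟨k, k', rfl, rfl⟩ | ⟨hA, rfl⟩
      · have hkk : classOf (Relation.EqvGen r) (k.proc a b c) =
          classOf (Relation.EqvGen r) (k'.proc a b c) := classOf_eq hEq (hE (k, 0) (k', 0))
        exact iff_of_false (not_qTrans_proc hca hcb hEq hE hcl hq hC hne)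
          (not_qTrans_proc hca hcb hEq hE hcl hq hC (by rwa [← hkk]))
      · exact qTrans_residue_iff hEq hr hA hC
  exact ⟨hcbb, _, hcbb, hHE⟩
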